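/- arXiv:2506.07780 — 3 statements merged into one kernel-verified Lean document; each statement's English description precedes it below -/
import Mathlib

section
/- Let v : ℝ → ℝ → ℝ be a smooth function of (x,t) with v(x,t) ≠ 0 for all (x,t), satisfying the 3rd potential Kupershmidt equation v_t = v_{5x} - 5·v_{xx}v_{4x}/v_x + 5·v_{xx}²v_{xxx}/v_x², with v_x(x,t) ≠ 0 for all (x,t). Then for any constant c ∈ ℝ, the function v̄(x,t) := -1/v(x,t) + c also satisfies the 3rd potential Kupershmidt equation v̄_t = v̄_{5x} - 5·v̄_{xx}v̄_{4x}/v̄_x + 5·v̄_{xx}²v̄_{xxx}/v̄_x². -/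
/-!
The right-hand side of the equation factors as `v_x (S_xx + 4 S ^ 2)`, where
`S = (v_xx / v_x)_x - (v_xx / v_x) ^ 2 / 2` is the Schwarzian derivative of `v` in `x`. Replacing
`v` by a Möbius transform of `v` leaves `S` unchanged and multiplies `v_t` and `v_x` by the same
nonzero factor, so it preserves the equation; `-1 / v + c` is such a transform.
-/

/-- Total `x`-derivative of a function of `(x, t)`. -/
noncomputable def dx (f : ℝ → ℝ → ℝ) : ℝ → ℝ → ℝ := fun x t => deriv (fun y => f y t) x

/-- Total `t`-derivative of a function of `(x, t)`. -/
noncomputable def dt (f : ℝ → ℝ → ℝ) : ℝ → ℝ → ℝ := fun x t => deriv (fun s => f x s) t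

/-- The 3rd potential Kupershmidt equation. -/
def Kup3 (v : ℝ → ℝ → ℝ) : Prop :=
  ∀ x t, dt v x t =
    dx (dx (dx (dx (dx v)))) x t
    - 5 * dx (dx v) x t * dx (dx (dx (dx v))) x t / dx v x t
    + 5 * (dx (dx v) x t)^2 * dx (dx (dx v)) x t / (dx v x t)^2

section LogDeriv

variable {𝕜 : Type*} [NontriviallyNormedField 𝕜] {g h : 𝕜 → 𝕜}

lemma contDiff_logDeriv {n : WithTop ℕ∞} (hg : ContDiff 𝕜 (n + 1) g) (hg₀ : ∀ x, g x ≠ 0) :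
    ContDiff 𝕜 n (logDeriv g) :=
  hg.deriv'.div (hg.of_le le_self_add) hg₀

lemma deriv_logDeriv {x : 𝕜} (hg : DifferentiableAt 𝕜 g x)
    (hg' : DifferentiableAt 𝕜 (deriv g) x) (hgx : g x ≠ 0) :
    deriv (logDeriv g) x = deriv (deriv g) x / g x - logDeriv g x ^ 2 := by
  rw [logDeriv, deriv_div hg' hg hgx, Pi.div_apply]
  field_simp

lemma deriv_mul_eq_logDeriv_mul (hh : Differentiable 𝕜 h) (hg : Differentiable 𝕜 g)
    (hg₀ : ∀ x, g x ≠ 0) : deriv (h * g) = (deriv h + logDeriv g * h) * g := by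
  funext x
  have hgx := hg₀ x
  rw [deriv_mul (hh x) (hg x)]
  simp only [Pi.mul_apply, Pi.add_apply, logDeriv_apply]
  field_simp

lemma deriv_eq_logDeriv_mul (hg₀ : ∀ x, g x ≠ 0) : deriv g = logDeriv g * g :=
  funext fun x => (div_mul_cancel₀ _ (hg₀ x)).symm

lemma iterate_deriv_two_eq_logDeriv_mul (hg : ContDiff 𝕜 2 g) (hg₀ : ∀ x, g x ≠ 0) :
    deriv^[2] g = (deriv (logDeriv g) + logDeriv g ^ 2) * g := by
  have hp : ContDiff 𝕜 1 (logDeriv g) := contDiff_logDeriv (n := 1) hg hg₀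
  change deriv (deriv g) = _
  rw [deriv_eq_logDeriv_mul hg₀, deriv_mul_eq_logDeriv_mul (hp.differentiable one_ne_zero)
    (hg.differentiable two_ne_zero) hg₀, ← sq]

lemma iterate_deriv_three_eq_logDeriv_mul (hg : ContDiff 𝕜 3 g) (hg₀ : ∀ x, g x ≠ 0) :
    deriv^[3] g =
      (deriv^[2] (logDeriv g) + 3 * logDeriv g * deriv (logDeriv g) + logDeriv g ^ 3) * g := by
  have hp : ContDiff 𝕜 2 (logDeriv g) := contDiff_logDeriv (n := 2) hg hg₀
  have hp₀ : Differentiable 𝕜 (logDeriv g) := hp.differentiable two_ne_zero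
  have hp₁ : Differentiable 𝕜 (deriv (logDeriv g)) := hp.differentiable_deriv_two
  have deriv_coeff : deriv (deriv (logDeriv g) + logDeriv g ^ 2) =
      deriv^[2] (logDeriv g) + 2 * logDeriv g * deriv (logDeriv g) := by
    funext x
    rw [deriv_add (hp₁ x) ((hp₀ x).pow 2), deriv_pow (hp₀ x)]
    simp
  rw [Function.iterate_succ_apply', iterate_deriv_two_eq_logDeriv_mul (hg.of_le (by norm_num)) hg₀,
    deriv_mul_eq_logDeriv_mul (hp₁.add (hp₀.pow 2)) (hg.differentiable three_ne_zero) hg₀,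
    deriv_coeff]
  ring

lemma iterate_deriv_four_eq_logDeriv_mul (hg : ContDiff 𝕜 4 g) (hg₀ : ∀ x, g x ≠ 0) :
    deriv^[4] g =
      (deriv^[3] (logDeriv g) + 4 * logDeriv g * deriv^[2] (logDeriv g) +
        3 * deriv (logDeriv g) ^ 2 + 6 * logDeriv g ^ 2 * deriv (logDeriv g) +
        logDeriv g ^ 4) * g := by
  have hp : ContDiff 𝕜 3 (logDeriv g) := contDiff_logDeriv (n := 3) hg hg₀
  have hp₀ : Differentiable 𝕜 (logDeriv g) := hp.differentiable three_ne_zero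
  have hp₁ : Differentiable 𝕜 (deriv (logDeriv g)) :=
    (hp.of_le (by norm_num)).differentiable_deriv_two
  have hp₂ : Differentiable 𝕜 (deriv^[2] (logDeriv g)) :=
    (hp.iterate_deriv' 1 2).differentiable one_ne_zero
  have h_three : Differentiable 𝕜 (3 : 𝕜 → 𝕜) := differentiable_const 3
  have deriv_coeff : deriv (deriv^[2] (logDeriv g) + 3 * logDeriv g * deriv (logDeriv g) +
      logDeriv g ^ 3) = deriv^[3] (logDeriv g) + 3 * deriv (logDeriv g) ^ 2 +
      3 * logDeriv g * deriv^[2] (logDeriv g) + 3 * logDeriv g ^ 2 * deriv (logDeriv g) := by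
    funext x
    have hd₀ : HasDerivAt (logDeriv g) (deriv (logDeriv g) x) x := (hp₀ x).hasDerivAt
    have hd₁ : HasDerivAt (deriv (logDeriv g)) (deriv^[2] (logDeriv g) x) x := (hp₁ x).hasDerivAt
    have hd₂ : HasDerivAt (deriv^[2] (logDeriv g)) (deriv^[3] (logDeriv g) x) x :=
      (hp₂ x).hasDerivAt
    refine ((hd₂.add ((hd₀.const_mul 3).mul hd₁)).add (hd₀.pow 3)).deriv.trans ?_
    simp only [Nat.cast_ofNat, Nat.add_one_sub_one,
      Pi.add_apply, Pi.mul_apply, Pi.ofNat_apply, Pi.pow_apply]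
    ring
  rw [Function.iterate_succ_apply',
    iterate_deriv_three_eq_logDeriv_mul (hg.of_le (by norm_num)) hg₀,
    deriv_mul_eq_logDeriv_mul ((hp₂.add ((h_three.mul hp₀).mul hp₁)).add (hp₀.pow 3))
      (hg.differentiable four_ne_zero) hg₀, deriv_coeff]
  ring

end LogDeriv

section Schwarzian

variable {𝕜 : Type*} [NontriviallyNormedField 𝕜] {f : 𝕜 → 𝕜}

/-- The Möbius transformation `z ↦ (a z + b) / (c z + d)`, with value `0` at its pole. -/
def mobius (a b c d z : 𝕜) : 𝕜 := (a * z + b) / (c * z + d)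

/-- The Schwarzian derivative `p' - p ^ 2 / 2`, where `p = f'' / f'` is the logarithmic derivative
of `f'`. It is the differential invariant of `f` under Möbius transformations. -/
noncomputable def schwarzian (f : 𝕜 → 𝕜) : 𝕜 → 𝕜 := fun x =>
  deriv (logDeriv (deriv f)) x - logDeriv (deriv f) x ^ 2 / 2

lemma neg_one_div_add_eq_mobius {z : 𝕜} (hz : z ≠ 0) (c : 𝕜) :
    -1 / z + c = mobius c (-1) 1 0 z := by
  simp only [mobius, one_mul, add_zero]
  field_simp
  ring

lemma hasDerivAt_mobius {f' x : 𝕜} (a b c d : 𝕜) (hf : HasDerivAt f f' x)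
    (hpole : c * f x + d ≠ 0) :
    HasDerivAt (fun y => mobius a b c d (f y)) ((a * d - b * c) * (f' / (c * f x + d) ^ 2)) x := by
  refine (((hf.const_mul a).add_const b).fun_div ((hf.const_mul c).add_const d)
    hpole).congr_deriv ?_
  ring

lemma contDiff_mobius {n : WithTop ℕ∞} (a b c d : 𝕜) (hf : ContDiff 𝕜 n f)
    (hpole : ∀ x, c * f x + d ≠ 0) : ContDiff 𝕜 n (fun x => mobius a b c d (f x)) :=
  ((contDiff_const.mul hf).add contDiff_const).div ((contDiff_const.mul hf).add contDiff_const)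
    hpole

lemma logDeriv_deriv_mobius {a b c d : 𝕜} (hf : ContDiff 𝕜 2 f) (hf' : ∀ x, deriv f x ≠ 0)
    (hdet : a * d - b * c ≠ 0) (hpole : ∀ x, c * f x + d ≠ 0) :
    logDeriv (deriv fun x => mobius a b c d (f x)) = fun x =>
      logDeriv (deriv f) x - 2 * logDeriv (fun y => c * f y + d) x := by
  have hf₀ : Differentiable 𝕜 f := hf.differentiable two_ne_zero
  have hden : Differentiable 𝕜 fun y => c * f y + d := (hf₀.const_mul c).add_const d
  have hderiv : deriv (fun x => mobius a b c d (f x)) =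
      fun x => (a * d - b * c) * (deriv f x / (c * f x + d) ^ 2) :=
    funext fun x => (hasDerivAt_mobius a b c d (hf₀ x).hasDerivAt (hpole x)).deriv
  funext x
  rw [hderiv, logDeriv_const_mul x _ hdet,
    logDeriv_div (g := fun y => (c * f y + d) ^ 2) x (hf' x) (pow_ne_zero 2 (hpole x))
      (hf.differentiable_deriv_two x) ((hden x).fun_pow 2), logDeriv_fun_pow (hden x), Nat.cast_two]

lemma deriv_logDeriv_const_mul_add_const {x : 𝕜} (c d : 𝕜) (hf : Differentiable 𝕜 f)
    (hf' : DifferentiableAt 𝕜 (deriv f) x) (hfx : deriv f x ≠ 0) (hpole : c * f x + d ≠ 0) :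
    deriv (logDeriv fun y => c * f y + d) x =
      logDeriv (fun y => c * f y + d) x *
        (logDeriv (deriv f) x - logDeriv (fun y => c * f y + d) x) := by
  have hderiv : deriv (fun y => c * f y + d) = fun y => c * deriv f y := by
    funext y
    rw [deriv_add_const, deriv_const_mul c (hf y)]
  rw [deriv_logDeriv (((hf x).const_mul c).add_const d) (hderiv ▸ hf'.const_mul c) hpole]
  simp only [logDeriv_apply, hderiv, deriv_const_mul c hf']
  field_simp

-- With `p = f'' / f'` and `q = c f' / (c f + d)`, the transformation replaces `p` by `p - 2 q`,
-- and `q' = q (p - q)` makes `p' - p ^ 2 / 2` invariant.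
theorem schwarzian_mobius [CharZero 𝕜] {a b c d : 𝕜} (hf : ContDiff 𝕜 3 f)
    (hf' : ∀ x, deriv f x ≠ 0) (hdet : a * d - b * c ≠ 0) (hpole : ∀ x, c * f x + d ≠ 0) :
    schwarzian (fun x => mobius a b c d (f x)) = schwarzian f := by
  have hf₂ : ContDiff 𝕜 2 f := hf.of_le (by norm_num)
  have hf₀ : Differentiable 𝕜 f := hf.differentiable three_ne_zero
  have hp : Differentiable 𝕜 (logDeriv (deriv f)) :=
    (contDiff_logDeriv (n := 1) (hf.iterate_deriv' 2 1) hf').differentiable one_ne_zero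
  have hq : Differentiable 𝕜 (logDeriv fun y => c * f y + d) :=
    (contDiff_logDeriv (n := 1) ((contDiff_const.mul hf₂).add contDiff_const)
      hpole).differentiable one_ne_zero
  funext x
  rw [schwarzian, schwarzian, logDeriv_deriv_mobius hf₂ hf' hdet hpole,
    deriv_fun_sub (hp x) ((hq x).const_mul 2), deriv_const_mul 2 (hq x),
    deriv_logDeriv_const_mul_add_const c d hf₀ (hf₂.differentiable_deriv_two x) (hf' x)
      (hpole x)]
  ring

lemma iterate_deriv_two_schwarzian [CharZero 𝕜] (hf : ContDiff 𝕜 5 f)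
    (hf' : ∀ x, deriv f x ≠ 0) (x : 𝕜) :
    deriv^[2] (schwarzian f) x = deriv^[3] (logDeriv (deriv f)) x -
      deriv (logDeriv (deriv f)) x ^ 2 -
      logDeriv (deriv f) x * deriv^[2] (logDeriv (deriv f)) x := by
  set p := logDeriv (deriv f)
  have hp : ContDiff 𝕜 3 p := contDiff_logDeriv (n := 3) (hf.iterate_deriv' 4 1) hf'
  have hp₀ (y) : HasDerivAt p (deriv p y) y := (hp.differentiable three_ne_zero y).hasDerivAt
  have hp₁ (y) : HasDerivAt (deriv p) (deriv^[2] p y) y :=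
    ((hp.of_le (by norm_num)).differentiable_deriv_two y).hasDerivAt
  have hp₂ : HasDerivAt (deriv^[2] p) (deriv^[3] p x) x :=
    ((hp.iterate_deriv' 1 2).differentiable one_ne_zero x).hasDerivAt
  have deriv_schwarzian : deriv (schwarzian f) = fun y => deriv^[2] p y - p y * deriv p y := by
    funext y
    refine (((hp₁ y).fun_sub (((hp₀ y).fun_pow 2).div_const 2)).congr_deriv ?_).deriv
    ring
  change deriv (deriv (schwarzian f)) x = _
  rw [deriv_schwarzian]
  refine ((hp₂.fun_sub ((hp₀ x).fun_mul (hp₁ x))).congr_deriv ?_).deriv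
  ring

theorem kupershmidt_eq_deriv_mul_schwarzian [CharZero 𝕜] (hf : ContDiff 𝕜 5 f)
    (hf' : ∀ x, deriv f x ≠ 0) (x : 𝕜) :
    deriv^[5] f x - 5 * deriv^[2] f x * deriv^[4] f x / deriv f x +
        5 * deriv^[2] f x ^ 2 * deriv^[3] f x / deriv f x ^ 2 =
      deriv f x * (deriv^[2] (schwarzian f) x + 4 * schwarzian f x ^ 2) := by
  have hg : ContDiff 𝕜 4 (deriv f) := hf.iterate_deriv' 4 1
  have hfx := hf' x
  rw [iterate_deriv_two_schwarzian hf hf', schwarzian]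
  simp only [Function.iterate_succ_apply _ _ f, Function.iterate_one]
  rw [iterate_deriv_four_eq_logDeriv_mul hg hf',
    iterate_deriv_three_eq_logDeriv_mul (hg.of_le (by norm_num)) hf',
    iterate_deriv_two_eq_logDeriv_mul (hg.of_le (by norm_num)) hf', deriv_eq_logDeriv_mul hf']
  simp only [Pi.mul_apply, Pi.add_apply, Pi.pow_apply, Pi.ofNat_apply]
  field_simp
  ring

end Schwarzian

section Kup3

variable {v : ℝ → ℝ → ℝ}

theorem kup3_iff_schwarzian (hv : ∀ t, ContDiff ℝ 5 fun x => v x t) (hvx : ∀ x t, dx v x t ≠ 0) :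
    Kup3 v ↔ ∀ x t, dt v x t = dx v x t *
      (deriv^[2] (schwarzian fun y => v y t) x + 4 * schwarzian (fun y => v y t) x ^ 2) :=
  forall₂_congr fun x t => Iff.of_eq <| congrArg (dt v x t = ·) <|
    kupershmidt_eq_deriv_mul_schwarzian (hv t) (hvx · t) x

theorem kup3_invariance_inverse_general {a b c d : ℝ} (hx : ∀ t, ContDiff ℝ 5 fun x => v x t)
    (ht : ∀ x, Differentiable ℝ (v x)) (hvx : ∀ x t, dx v x t ≠ 0)
    (hdet : a * d - b * c ≠ 0) (hpole : ∀ x t, c * v x t + d ≠ 0) (heq : Kup3 v) :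
    Kup3 fun x t => mobius a b c d (v x t) := by
  have hwx (x t) : dx (fun x t => mobius a b c d (v x t)) x t =
      (a * d - b * c) * (dx v x t / (c * v x t + d) ^ 2) :=
    (hasDerivAt_mobius a b c d ((hx t).differentiable (by simp) x).hasDerivAt (hpole x t)).deriv
  have hwt (x t) : dt (fun x t => mobius a b c d (v x t)) x t =
      (a * d - b * c) * (dt v x t / (c * v x t + d) ^ 2) :=
    (hasDerivAt_mobius a b c d (ht x t).hasDerivAt (hpole x t)).deriv
  have hwx_ne (x t) : dx (fun x t => mobius a b c d (v x t)) x t ≠ 0 := by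
    rw [hwx]
    exact mul_ne_zero hdet (div_ne_zero (hvx x t) (pow_ne_zero 2 (hpole x t)))
  refine (kup3_iff_schwarzian (fun t => contDiff_mobius a b c d (hx t) (hpole · t)) hwx_ne).2
    fun x t => ?_
  rw [schwarzian_mobius ((hx t).of_le (by norm_num)) (hvx · t) hdet (hpole · t), hwt, hwx,
    (kup3_iff_schwarzian hx hvx).1 heq x t]
  ring

end Kup3

/-- Invariance of the 3rd potential Kupershmidt equation under `v ↦ -1/v + c`. -/
theorem kup3_invariance_inverse
    (v : ℝ → ℝ → ℝ)
    (hv : ContDiff ℝ (⊤ : ℕ∞) (fun p : ℝ × ℝ => v p.1 p.2))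
    (hne : ∀ x t, v x t ≠ 0)
    (hvx : ∀ x t, dx v x t ≠ 0)
    (heq : Kup3 v) (c : ℝ) :
    Kup3 (fun x t => -1 / v x t + c) := by
  simp only [neg_one_div_add_eq_mobius (hne _ _)]
  exact kup3_invariance_inverse_general
    (fun t => contDiff_infty.1 (hv.comp (contDiff_id.prodMk contDiff_const)) 5)
    (fun x => (hv.comp (contDiff_const.prodMk contDiff_id)).differentiable (by simp))
    hvx (by norm_num) (by simpa using hne) heq
end

section
/- Let v : ℝ → ℝ → ℝ be a smooth function of (x,t) with v_x(x,t) ≠ 0 for all (x,t), satisfying the 3rd potential Kupershmidt equation v_t = v_{5x} - 5·v_{xx}v_{4x}/v_x + 5·v_{xx}²v_{xxx}/v_x². Then the Schwarzian derivative k := v_{xxx}/v_x - (3/2)·(v_{xx}/v_x)² satisfies the k-equation: k_t = k_{5x} + 10kk_{xxx} + 25k_xk_{xx} + 20k²k_x. -/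
/-- The `k`-equation. -/
def KEq (k : ℝ → ℝ → ℝ) : Prop :=
  ∀ x t, dt k x t =
    dx (dx (dx (dx (dx k)))) x t
    + 10 * k x t * dx (dx (dx k)) x t
    + 25 * dx k x t * dx (dx k) x t
    + 20 * (k x t)^2 * dx k x t

/-!
Let `a = v_x` and `u = a_x / (2a)`. The Schwarzian derivative of `v` is `k = 2(u_x - u²)`, and the
3rd potential Kupershmidt equation reads `v_t = a F` with `F = k_xx + 4k²`. Along any flow
`v_t = a F`, the equality `a_tx = a_xt` gives `2u_t = (2uF + F_x)_x`, whence
`k_t = F_xxx + 2k F_x + k_x F`. For `F = k_xx + 4k²` this is the `k`-equation.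

With `u` in place of `v_xx / v_x` all coefficients are integers, so the computation is valid in
every commutative ring with two commuting derivations; it is applied to smooth functions on the
plane.
-/

section DifferentialAlgebra

variable {R A : Type*} [CommSemiring R] [CommRing A] [Algebra R A] {D T : Derivation R A A}
  {a u F k v : A}

lemma derivation_ofNat (D : Derivation R A A) (n : ℕ) [n.AtLeastTwo] :
    D (ofNat(n) : A) = 0 :=
  D.map_natCast n

lemma derivation_sq (D : Derivation R A A) (f : A) : D (f ^ 2) = 2 * f * D f := by
  rw [sq, D.leibniz, smul_eq_mul]
  ring

lemma derivation_mul_of_eq_two_mul (hau : D a = 2 * a * u) (f : A) :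
    D (a * f) = a * (D f + 2 * u * f) := by
  rw [D.leibniz, hau, smul_eq_mul, smul_eq_mul]
  ring

lemma derivation_derivation_of_eq_two_mul (hau : D a = 2 * a * u) :
    D (D a) = a * (2 * D u + 4 * u ^ 2) := by
  have ha : D a = a * (2 * u) := by rw [hau]; ring
  rw [ha, derivation_mul_of_eq_two_mul hau, D.leibniz, derivation_ofNat, smul_eq_mul, smul_zero]
  ring

/-- The Miura map `u ↦ 2(u' - u²)`. It sends `u = v'' / (2v')` to the Schwarzian derivative of `v`;
moreover, if `φ' = -uφ` then `2φ'' + miura D u * φ = 0`. -/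
def miura (D : Derivation R A A) (u : A) : A := 2 * (D u - u ^ 2)

lemma schwarzian_numerator_eq_miura (hau : D a = 2 * a * u) :
    2 * a * D (D a) - 3 * D a ^ 2 = 2 * a ^ 2 * miura D u := by
  rw [derivation_derivation_of_eq_two_mul hau, hau, miura]
  ring

lemma kupershmidt3_numerator_eq_miura (hau : D a = 2 * a * u) :
    a ^ 2 * D (D (D (D a))) - 5 * a * D a * D (D (D a)) + 5 * D a ^ 2 * D (D a) =
      a ^ 3 * (D (D (miura D u)) + 4 * miura D u ^ 2) := by
  have hD3 : D (D (D a)) = a * (2 * D (D u) + 12 * u * D u + 8 * u ^ 3) := by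
    rw [derivation_derivation_of_eq_two_mul hau, derivation_mul_of_eq_two_mul hau]
    simp only [D.leibniz, derivation_sq, derivation_ofNat, map_add, smul_eq_mul]
    ring
  have hD4 : D (D (D (D a))) =
      a * (2 * D (D (D u)) + 16 * u * D (D u) + 12 * D u ^ 2 + 48 * u ^ 2 * D u + 16 * u ^ 4) := by
    rw [hD3, derivation_mul_of_eq_two_mul hau]
    simp only [D.leibniz, D.leibniz_pow, derivation_ofNat, map_add, smul_eq_mul, nsmul_eq_mul]
    push_cast
    ring
  have hkxx : D (D (miura D u)) = 2 * D (D (D u)) - 4 * u * D (D u) - 4 * D u ^ 2 := by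
    simp only [miura, D.leibniz, derivation_sq, derivation_ofNat, map_add, map_sub, map_zero,
      smul_eq_mul]
    ring
  rw [hD4, hD3, derivation_derivation_of_eq_two_mul hau, hau, hkxx, miura]
  ring

lemma two_mul_derivation_eq_of_flow (hDT : Function.Commute T D) (ha : IsLeftRegular a)
    (hau : D a = 2 * a * u) (hat : T a = D (a * F)) :
    2 * T u = D (2 * u * F + D F) := by
  have hat' : T a = a * (2 * u * F + D F) := by
    rw [hat, derivation_mul_of_eq_two_mul hau, add_comm]
  have hmixed : T (2 * a * u) = D (a * (2 * u * F + D F)) := by rw [← hau, ← hat', hDT a]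
  simp only [derivation_mul_of_eq_two_mul hau, T.leibniz, derivation_ofNat, hat',
    smul_eq_mul] at hmixed
  apply ha
  linear_combination hmixed

lemma miura_evolution (hDT : Function.Commute T D) (hut : 2 * T u = D (2 * u * F + D F)) :
    T (miura D u) = D (D (D F)) + 2 * miura D u * D F + D (miura D u) * F := by
  have hutx : 2 * D (T u) = D (D (2 * u * F + D F)) := by
    rw [← hut, D.leibniz, derivation_ofNat, smul_eq_mul, smul_zero, add_zero]
  calc
    T (miura D u) = 2 * D (T u) - 2 * u * (2 * T u) := by
      simp only [miura, T.leibniz, derivation_sq, derivation_ofNat, map_sub, hDT u, smul_eq_mul]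
      ring
    _ = D (D (2 * u * F + D F)) - 2 * u * D (2 * u * F + D F) := by rw [hutx, hut]
    _ = D (D (D F)) + 2 * miura D u * D F + D (miura D u) * F := by
      simp only [miura, D.leibniz, derivation_sq, derivation_ofNat, map_add, map_sub, map_zero,
        smul_eq_mul]
      ring

lemma kEq_rhs_eq_of_kupershmidt3_flux (k : A) (hF : F = D (D k) + 4 * k ^ 2) :
    D (D (D F)) + 2 * k * D F + D k * F =
      D (D (D (D (D k)))) + 10 * k * D (D (D k)) + 25 * D k * D (D k) + 20 * k ^ 2 * D k := by
  simp only [hF, D.leibniz, derivation_sq, derivation_ofNat, map_add, map_zero, smul_eq_mul]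
  ring

theorem miura_evolution_of_kupershmidt3 (hDT : Function.Commute T D) (hv : IsLeftRegular (D v))
    (hvu : D (D v) = 2 * D v * u)
    (hvt : D v ^ 2 * T v = D v ^ 2 * D (D (D (D (D v)))) - 5 * D v * D (D v) * D (D (D (D v)))
      + 5 * D (D v) ^ 2 * D (D (D v)))
    (hk : k = miura D u) :
    T k =
      D (D (D (D (D k)))) + 10 * k * D (D (D k)) + 25 * D k * D (D k) + 20 * k ^ 2 * D k := by
  set F := D (D k) + 4 * k ^ 2 with hF
  have hflow : T v = D v * F := by
    have hsq : D v ^ 2 * T v = D v ^ 2 * (D v * F) := by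
      rw [hvt, kupershmidt3_numerator_eq_miura hvu, hF, hk]
      ring
    exact hv.pow 2 hsq
  have hut : 2 * T u = D (2 * u * F + D F) :=
    two_mul_derivation_eq_of_flow hDT hv hvu (by rw [hDT v, hflow])
  have hkt : T k = D (D (D F)) + 2 * k * D F + D k * F := hk ▸ miura_evolution hDT hut
  rw [hkt, kEq_rhs_eq_of_kupershmidt3_flux k hF]

end DifferentialAlgebra

section SmoothFunctions

open scoped ContDiff

variable {𝕜 E : Type*} [NontriviallyNormedField 𝕜] [NormedAddCommGroup E] [NormedSpace 𝕜 E]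

variable (𝕜 E) in
/-- The algebra of smooth scalar functions on a normed space, on which differentiation in a fixed
direction is everywhere defined and hence a derivation. -/
def smoothFunctions : Subalgebra 𝕜 (E → 𝕜) where
  carrier := {f | ContDiff 𝕜 ∞ f}
  mul_mem' hf hg := hf.out.mul hg.out
  add_mem' hf hg := hf.out.add hg.out
  algebraMap_mem' c := show ContDiff 𝕜 ∞ fun _ => c from contDiff_const

lemma contDiff_smoothFunctions (f : smoothFunctions 𝕜 E) : ContDiff 𝕜 ∞ (f : E → 𝕜) :=
  f.2

lemma smoothFunctions_ofNat_apply (n : ℕ) [n.AtLeastTwo] (p : E) :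
    ((ofNat(n) : smoothFunctions 𝕜 E) : E → 𝕜) p = ofNat(n) :=
  rfl

lemma differentiable_smoothFunctions (f : smoothFunctions 𝕜 E) :
    Differentiable 𝕜 (f : E → 𝕜) :=
  (contDiff_smoothFunctions f).differentiable (by simp)

lemma contDiff_fderiv_smoothFunctions (f : smoothFunctions 𝕜 E) :
    ContDiff 𝕜 ∞ (fderiv 𝕜 (f : E → 𝕜)) :=
  (contDiff_smoothFunctions f).fderiv_right (by simp)

variable (𝕜) in
/-- Differentiation in the direction `e`, as a derivation of the algebra of smooth functions. -/
noncomputable def directionalDeriv (e : E) :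
    Derivation 𝕜 (smoothFunctions 𝕜 E) (smoothFunctions 𝕜 E) :=
  Derivation.mk'
    { toFun f := ⟨fun p => fderiv 𝕜 (f : E → 𝕜) p e,
        (contDiff_fderiv_smoothFunctions f).clm_apply contDiff_const⟩
      map_add' f g := Subtype.ext <| funext fun p => by
        simp [fderiv_add (differentiable_smoothFunctions f p) (differentiable_smoothFunctions g p)]
      map_smul' c f := Subtype.ext <| funext fun p => by
        simp [fderiv_const_smul (differentiable_smoothFunctions f p)] }
    fun f g => Subtype.ext <| funext fun p => by
      simp [fderiv_mul (differentiable_smoothFunctions f p) (differentiable_smoothFunctions g p)]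

lemma coe_directionalDeriv (e : E) (f : smoothFunctions 𝕜 E) :
    (directionalDeriv 𝕜 e f : E → 𝕜) = fun p => fderiv 𝕜 (f : E → 𝕜) p e :=
  rfl

lemma directionalDeriv_directionalDeriv_apply (d e : E) (f : smoothFunctions 𝕜 E) (p : E) :
    (directionalDeriv 𝕜 d (directionalDeriv 𝕜 e f) : E → 𝕜) p =
      fderiv 𝕜 (fderiv 𝕜 (f : E → 𝕜)) p d e := by
  have hf : DifferentiableAt 𝕜 (fderiv 𝕜 (f : E → 𝕜)) p :=
    (contDiff_fderiv_smoothFunctions f).differentiable (by simp) p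
  simp [coe_directionalDeriv, fderiv_clm_apply hf (differentiableAt_const e)]

lemma directionalDeriv_commute [IsRCLikeNormedField 𝕜] (d e : E) :
    Function.Commute (directionalDeriv 𝕜 d) (directionalDeriv 𝕜 e) := fun f =>
  Subtype.ext <| funext fun p => by
    have hsymm : IsSymmSndFDerivAt 𝕜 (f : E → 𝕜) p :=
      (contDiff_smoothFunctions f).contDiffAt.isSymmSndFDerivAt (by
        rw [minSmoothness_of_isRCLikeNormedField]
        exact WithTop.coe_le_coe.2 (le_top (a := (2 : ℕ∞))))
    simp only [directionalDeriv_directionalDeriv_apply, hsymm.eq d e]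

lemma isUnit_smoothFunctions {f : smoothFunctions 𝕜 E} (hf : ∀ p, (f : E → 𝕜) p ≠ 0) :
    IsUnit f :=
  IsUnit.of_mul_eq_one ⟨fun p => ((f : E → 𝕜) p)⁻¹, (contDiff_smoothFunctions f).inv hf⟩ <|
    Subtype.ext <| funext fun p => mul_inv_cancel₀ (hf p)

end SmoothFunctions

open Function (curry)

local notation "∂x" => directionalDeriv ℝ ((1, 0) : ℝ × ℝ)
local notation "∂t" => directionalDeriv ℝ ((0, 1) : ℝ × ℝ)

lemma dx_curry (f : smoothFunctions ℝ (ℝ × ℝ)) : dx (curry f) = curry (∂x f) := by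
  funext x t
  have hf := (differentiable_smoothFunctions f (x, t)).hasFDerivAt
  exact (hf.comp_hasDerivAt x ((hasDerivAt_id x).prodMk (hasDerivAt_const x t))).deriv

lemma dt_curry (f : smoothFunctions ℝ (ℝ × ℝ)) : dt (curry f) = curry (∂t f) := by
  funext x t
  have hf := (differentiable_smoothFunctions f (x, t)).hasFDerivAt
  exact (hf.comp_hasDerivAt t ((hasDerivAt_const t x).prodMk (hasDerivAt_id t))).deriv

section Plane

variable {f u : smoothFunctions ℝ (ℝ × ℝ)}

lemma kEq_curry (hf : ∂t f = ∂x (∂x (∂x (∂x (∂x f)))) + 10 * f * ∂x (∂x (∂x f))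
    + 25 * ∂x f * ∂x (∂x f) + 20 * f ^ 2 * ∂x f) :
    KEq (curry f) := by
  intro x t
  simp only [dx_curry, dt_curry]
  exact congrFun (congrArg Subtype.val hf) (x, t)

lemma kup3_curry_mul_sq (hfx : ∀ p, (∂x f : ℝ × ℝ → ℝ) p ≠ 0) (hf : Kup3 (curry f)) :
    ∂x f ^ 2 * ∂t f = ∂x f ^ 2 * ∂x (∂x (∂x (∂x (∂x f))))
      - 5 * ∂x f * ∂x (∂x f) * ∂x (∂x (∂x (∂x f))) + 5 * ∂x (∂x f) ^ 2 * ∂x (∂x (∂x f)) := by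
  refine Subtype.ext <| funext fun p => ?_
  have hp := hf p.1 p.2
  simp only [dx_curry, dt_curry, curry] at hp
  have hfxp := hfx p
  field_simp at hp
  simp only [MulMemClass.coe_mul, SubmonoidClass.coe_pow, AddMemClass.coe_add,
    AddSubgroupClass.coe_sub, Pi.mul_apply, Pi.pow_apply, Pi.add_apply, Pi.sub_apply,
    smoothFunctions_ofNat_apply]
  linear_combination hp

lemma curry_miura_eq_schwarzian (hfx : ∀ p, (∂x f : ℝ × ℝ → ℝ) p ≠ 0)
    (hu : ∂x (∂x f) = 2 * ∂x f * u) :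
    curry ↑(miura ∂x u) = fun x t => dx (dx (dx (curry f))) x t / dx (curry f) x t
      - (3 / 2) * (dx (dx (curry f)) x t / dx (curry f) x t) ^ 2 := by
  funext x t
  have hnum := congrFun (congrArg Subtype.val (schwarzian_numerator_eq_miura hu)) (x, t)
  have hfxp := hfx (x, t)
  simp only [dx_curry, curry]
  simp only [AddSubgroupClass.coe_sub, MulMemClass.coe_mul, SubmonoidClass.coe_pow, Pi.sub_apply,
    Pi.mul_apply, Pi.pow_apply, smoothFunctions_ofNat_apply] at hnum
  field_simp
  linear_combination -hnum

end Plane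

/-- The Schwarzian derivative `k = {v, x}` of a solution of the 3rd potential
Kupershmidt equation solves the `k`-equation. -/
theorem schwarzian_solves_k_equation
    (v : ℝ → ℝ → ℝ)
    (hv : ContDiff ℝ (⊤ : ℕ∞) (fun p : ℝ × ℝ => v p.1 p.2))
    (hvx : ∀ x t, dx v x t ≠ 0)
    (heq : Kup3 v) :
    KEq (fun x t => dx (dx (dx v)) x t / dx v x t
      - (3/2) * (dx (dx v) x t / dx v x t)^2) := by
  let V : smoothFunctions ℝ (ℝ × ℝ) := ⟨fun p => v p.1 p.2, hv⟩
  have hVx : ∀ p, (∂x V : ℝ × ℝ → ℝ) p ≠ 0 := fun p =>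
    (congrFun₂ (dx_curry V) p.1 p.2).symm.trans_ne (hvx p.1 p.2)
  obtain ⟨u, hu⟩ : 2 * ∂x V ∣ ∂x (∂x V) :=
    (isUnit_smoothFunctions fun p => mul_ne_zero two_ne_zero (hVx p)).dvd
  have hk : KEq (curry ↑(miura ∂x u)) :=
    kEq_curry <| miura_evolution_of_kupershmidt3 (directionalDeriv_commute _ _)
      (isUnit_smoothFunctions hVx).isRegular.left hu (kup3_curry_mul_sq hVx heq) rfl
  rwa [curry_miura_eq_schwarzian hVx hu] at hk
end

section
/- Let u : ℝ → ℝ → ℝ be a smooth function of (x,t) with u_x(x,t) < 0 for all (x,t), satisfying the 2nd potential Kupershmidt equation u_t = u_{5x} - 5·u_{xx}u_{4x}/u_x - (15/4)·u_{xxx}²/u_x + (65/4)·u_{xx}²u_{xxx}/u_x² - (135/16)·u_{xx}⁴/u_x³. Then U := (1/2)·ln(-2·u_x) satisfies the 1st potential Kupershmidt equation U_t = U_{5x} - 5U_{xx}U_{xxx} - 5U_x²U_{xxx} - 5U_xU_{xx}² + U_x⁵. -/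
/-- The 2nd potential Kupershmidt equation. -/
def Kup2 (u : ℝ → ℝ → ℝ) : Prop :=
  ∀ x t, dt u x t =
    dx (dx (dx (dx (dx u)))) x t
    - 5 * dx (dx u) x t * dx (dx (dx (dx u))) x t / dx u x t
    - (15/4) * (dx (dx (dx u)) x t)^2 / dx u x t
    + (65/4) * (dx (dx u) x t)^2 * dx (dx (dx u)) x t / (dx u x t)^2
    - (135/16) * (dx (dx u) x t)^4 / (dx u x t)^3

/-- The 1st potential Kupershmidt equation. -/
def Kup1 (U : ℝ → ℝ → ℝ) : Prop :=
  ∀ x t, dt U x t =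
    dx (dx (dx (dx (dx U)))) x t
    - 5 * dx (dx U) x t * dx (dx (dx U)) x t
    - 5 * (dx U x t)^2 * dx (dx (dx U)) x t
    - 5 * dx U x t * (dx (dx U) x t)^2
    + (dx U x t)^5

/-!
Put `v = u_x`, `U = (1/2) ln(-2v)` and `w = U_x`. Then `v_x = 2 w v`, so `(v f)_x = v (f_x + 2 w f)`
for every `f`. Iterating, each `x`-derivative of `u` is `v` times a differential polynomial in `w`,
and the 2nd potential Kupershmidt equation becomes `u_t = v g` with
`g = 2 w_xxx - 4 w w_xx - 3 w_x² - 2 w² w_x + w⁴`. By symmetry of mixed partials,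
`v_t = (u_t)_x = v (g_x + 2 w g)`, while `v_t = 2 v U_t`. Hence `U_t = g_x / 2 + w g`, which expands
to the right-hand side of the 1st potential Kupershmidt equation.
-/

open Function (uncurry)

section PartialDerivatives

variable {f : ℝ → ℝ → ℝ}

theorem hasDerivAt_fst_fderiv (hf : Differentiable ℝ (uncurry f)) (x t : ℝ) :
    HasDerivAt (fun y => f y t) (fderiv ℝ (uncurry f) (x, t) (1, 0)) x :=
  (hf (x, t)).hasFDerivAt.comp_hasDerivAt (f := fun y => (y, t)) x
    ((hasDerivAt_id x).prodMk (hasDerivAt_const x t))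

theorem hasDerivAt_snd_fderiv (hf : Differentiable ℝ (uncurry f)) (x t : ℝ) :
    HasDerivAt (fun s => f x s) (fderiv ℝ (uncurry f) (x, t) (0, 1)) t :=
  (hf (x, t)).hasFDerivAt.comp_hasDerivAt (f := fun s => (x, s)) t
    ((hasDerivAt_const t x).prodMk (hasDerivAt_id t))

theorem hasDerivAt_dx (hf : Differentiable ℝ (uncurry f)) (x t : ℝ) :
    HasDerivAt (fun y => f y t) (dx f x t) x :=
  (hasDerivAt_fst_fderiv hf x t).differentiableAt.hasDerivAt

theorem hasDerivAt_dt (hf : Differentiable ℝ (uncurry f)) (x t : ℝ) :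
    HasDerivAt (fun s => f x s) (dt f x t) t :=
  (hasDerivAt_snd_fderiv hf x t).differentiableAt.hasDerivAt

theorem uncurry_dx_eq_fderiv (hf : Differentiable ℝ (uncurry f)) :
    uncurry (dx f) = fun p => fderiv ℝ (uncurry f) p (1, 0) :=
  funext fun p => (hasDerivAt_fst_fderiv hf p.1 p.2).deriv

theorem uncurry_dt_eq_fderiv (hf : Differentiable ℝ (uncurry f)) :
    uncurry (dt f) = fun p => fderiv ℝ (uncurry f) p (0, 1) :=
  funext fun p => (hasDerivAt_snd_fderiv hf p.1 p.2).deriv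

theorem contDiff_dx {m n : WithTop ℕ∞} (hf : ContDiff ℝ n (uncurry f)) (hmn : m + 1 ≤ n) :
    ContDiff ℝ m (uncurry (dx f)) := by
  have hn : n ≠ 0 := (zero_lt_one.trans_le (le_add_self.trans hmn)).ne'
  rw [uncurry_dx_eq_fderiv (hf.differentiable hn)]
  exact (hf.fderiv_right hmn).clm_apply contDiff_const

theorem contDiff_dt {m n : WithTop ℕ∞} (hf : ContDiff ℝ n (uncurry f)) (hmn : m + 1 ≤ n) :
    ContDiff ℝ m (uncurry (dt f)) := by
  have hn : n ≠ 0 := (zero_lt_one.trans_le (le_add_self.trans hmn)).ne'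
  rw [uncurry_dt_eq_fderiv (hf.differentiable hn)]
  exact (hf.fderiv_right hmn).clm_apply contDiff_const

theorem dt_dx_comm (hf : ContDiff ℝ 2 (uncurry f)) : dt (dx f) = dx (dt f) := by
  funext x t
  have hf_diff : Differentiable ℝ (uncurry f) := hf.differentiable two_ne_zero
  have hdx : Differentiable ℝ (uncurry (dx f)) :=
    (contDiff_dx (m := 1) hf one_add_one_eq_two.le).differentiable one_ne_zero
  have hdt : Differentiable ℝ (uncurry (dt f)) :=
    (contDiff_dt (m := 1) hf one_add_one_eq_two.le).differentiable one_ne_zero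
  have hfderiv : DifferentiableAt ℝ (fderiv ℝ (uncurry f)) (x, t) :=
    (hf.fderiv_right (m := 1) one_add_one_eq_two.le).differentiable one_ne_zero _
  have hsymm : IsSymmSndFDerivAt ℝ (uncurry f) (x, t) :=
    hf.contDiffAt.isSymmSndFDerivAt (by simp)
  calc dt (dx f) x t
      = fderiv ℝ (uncurry (dx f)) (x, t) (0, 1) := (hasDerivAt_snd_fderiv hdx x t).deriv
    _ = fderiv ℝ (fderiv ℝ (uncurry f)) (x, t) (0, 1) (1, 0) := by
      rw [uncurry_dx_eq_fderiv hf_diff, fderiv_clm_apply hfderiv (differentiableAt_const _)]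
      simp
    _ = fderiv ℝ (fderiv ℝ (uncurry f)) (x, t) (1, 0) (0, 1) := hsymm _ _
    _ = fderiv ℝ (uncurry (dt f)) (x, t) (1, 0) := by
      rw [uncurry_dt_eq_fderiv hf_diff, fderiv_clm_apply hfderiv (differentiableAt_const _)]
      simp
    _ = dx (dt f) x t := (hasDerivAt_fst_fderiv hdt x t).deriv.symm

end PartialDerivatives

section LogPotential

/-- The potential `U` determined by `v = -(1/2) e^{2U}`, for a negative function `v`. -/
noncomputable def logPotential (v : ℝ → ℝ → ℝ) : ℝ → ℝ → ℝ :=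
  fun x t => (1/2) * Real.log (-2 * v x t)

theorem hasDerivAt_half_log_const_mul {g : ℝ → ℝ} {g' c a : ℝ} (hc : c ≠ 0)
    (hg : HasDerivAt g g' a) (hga : g a ≠ 0) :
    HasDerivAt (fun y => (1/2) * Real.log (c * g y)) (g' / (2 * g a)) a := by
  refine (((hg.const_mul c).log (mul_ne_zero hc hga)).const_mul (1/2)).congr_deriv ?_
  field_simp

variable {v : ℝ → ℝ → ℝ}

theorem contDiff_logPotential {n : WithTop ℕ∞} (hv : ContDiff ℝ n (uncurry v))
    (hv₀ : ∀ x t, v x t ≠ 0) : ContDiff ℝ n (uncurry (logPotential v)) :=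
  contDiff_const.mul <| (contDiff_const.mul hv).log fun p =>
    mul_ne_zero (by norm_num) (hv₀ p.1 p.2)

theorem dx_eq_mul_dx_logPotential (hv : Differentiable ℝ (uncurry v)) {x t : ℝ}
    (hv₀ : v x t ≠ 0) : dx v x t = v x t * (2 * dx (logPotential v) x t) := by
  have hU : dx (logPotential v) x t = dx v x t / (2 * v x t) :=
    (hasDerivAt_half_log_const_mul (by norm_num) (hasDerivAt_dx hv x t) hv₀).deriv
  rw [hU]
  field_simp

theorem dt_eq_mul_dt_logPotential (hv : Differentiable ℝ (uncurry v)) {x t : ℝ}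
    (hv₀ : v x t ≠ 0) : dt v x t = v x t * (2 * dt (logPotential v) x t) := by
  have hU : dt (logPotential v) x t = dt v x t / (2 * v x t) :=
    (hasDerivAt_half_log_const_mul (by norm_num) (hasDerivAt_dt hv x t) hv₀).deriv
  rw [hU]
  field_simp

end LogPotential

section LogDerivative

variable {v w : ℝ → ℝ → ℝ}

theorem dx_mul_of_hasDerivAt_mul {a f f' : ℝ → ℝ → ℝ}
    (hv : ∀ x t, HasDerivAt (fun y => v y t) (v x t * a x t) x)
    (hf : ∀ x t, HasDerivAt (fun y => f y t) (f' x t) x) :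
    dx (fun x t => v x t * f x t) = fun x t => v x t * (f' x t + a x t * f x t) := by
  funext x t
  refine ((hv x t).mul (hf x t)).deriv.trans ?_
  ring

theorem dx_eq_of_log_deriv (hv : ∀ x t, HasDerivAt (fun y => v y t) (v x t * (2 * w x t)) x) :
    dx v = fun x t => v x t * (2 * w x t) :=
  funext₂ fun x t => (hv x t).deriv

theorem dx_dx_eq_of_log_deriv
    (hv : ∀ x t, HasDerivAt (fun y => v y t) (v x t * (2 * w x t)) x)
    (hw : ContDiff ℝ 1 (uncurry w)) :
    dx (dx v) = fun x t => v x t * (2 * dx w x t + 4 * w x t ^ 2) := by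
  have hw₀ := hasDerivAt_dx (hw.differentiable one_ne_zero)
  rw [dx_eq_of_log_deriv hv,
    dx_mul_of_hasDerivAt_mul hv fun x t => (hw₀ x t).const_mul 2]
  funext x t
  ring

theorem dx_dx_dx_eq_of_log_deriv
    (hv : ∀ x t, HasDerivAt (fun y => v y t) (v x t * (2 * w x t)) x)
    (hw : ContDiff ℝ 2 (uncurry w)) :
    dx (dx (dx v)) = fun x t =>
      v x t * (2 * dx (dx w) x t + 12 * (w x t * dx w x t) + 8 * w x t ^ 3) := by
  have hwx : ContDiff ℝ 1 (uncurry (dx w)) := contDiff_dx hw one_add_one_eq_two.le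
  have hw₀ := hasDerivAt_dx (hw.differentiable two_ne_zero)
  have hw₁ := hasDerivAt_dx (hwx.differentiable one_ne_zero)
  rw [dx_dx_eq_of_log_deriv hv (hw.of_le one_le_two),
    dx_mul_of_hasDerivAt_mul hv fun x t =>
      ((hw₁ x t).const_mul 2).fun_add (((hw₀ x t).fun_pow 2).const_mul 4)]
  funext x t
  push_cast
  ring

theorem dx_dx_dx_dx_eq_of_log_deriv
    (hv : ∀ x t, HasDerivAt (fun y => v y t) (v x t * (2 * w x t)) x)
    (hw : ContDiff ℝ 3 (uncurry w)) :
    dx (dx (dx (dx v))) = fun x t =>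
      v x t * (2 * dx (dx (dx w)) x t + 16 * (w x t * dx (dx w) x t) + 12 * dx w x t ^ 2
        + 48 * (w x t ^ 2 * dx w x t) + 16 * w x t ^ 4) := by
  have hwx : ContDiff ℝ 2 (uncurry (dx w)) := contDiff_dx hw two_add_one_eq_three.le
  have hwxx : ContDiff ℝ 1 (uncurry (dx (dx w))) := contDiff_dx hwx one_add_one_eq_two.le
  have hw₀ := hasDerivAt_dx (hw.differentiable three_ne_zero)
  have hw₁ := hasDerivAt_dx (hwx.differentiable two_ne_zero)
  have hw₂ := hasDerivAt_dx (hwxx.differentiable one_ne_zero)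
  rw [dx_dx_dx_eq_of_log_deriv hv (hw.of_le (by norm_num)),
    dx_mul_of_hasDerivAt_mul hv fun x t =>
      (((hw₂ x t).const_mul 2).fun_add (((hw₀ x t).fun_mul (hw₁ x t)).const_mul 12)).fun_add
        (((hw₀ x t).fun_pow 3).const_mul 8)]
  funext x t
  push_cast
  ring

end LogDerivative

section Kupershmidt

variable {u w U : ℝ → ℝ → ℝ}

/-- The differential polynomial `g` in `w = u_xx / (2 u_x)` such that the 2nd potential Kupershmidt
equation for `u` reads `u_t = u_x g`. -/
noncomputable def kup2Factor (w : ℝ → ℝ → ℝ) : ℝ → ℝ → ℝ := fun x t =>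
  2 * dx (dx (dx w)) x t - 4 * (w x t * dx (dx w) x t) - 3 * dx w x t ^ 2
    - 2 * (w x t ^ 2 * dx w x t) + w x t ^ 4

theorem hasDerivAt_kup2Factor (hw : ContDiff ℝ 4 (uncurry w)) (x t : ℝ) :
    HasDerivAt (fun y => kup2Factor w y t)
      (2 * dx (dx (dx (dx w))) x t - 4 * (w x t * dx (dx (dx w)) x t)
        - 10 * (dx w x t * dx (dx w) x t) - 2 * (w x t ^ 2 * dx (dx w) x t)
        - 4 * (w x t * dx w x t ^ 2) + 4 * (w x t ^ 3 * dx w x t)) x := by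
  have hwx : ContDiff ℝ 3 (uncurry (dx w)) := contDiff_dx hw three_add_one_eq_four.le
  have hwxx : ContDiff ℝ 2 (uncurry (dx (dx w))) := contDiff_dx hwx two_add_one_eq_three.le
  have hwxxx : ContDiff ℝ 1 (uncurry (dx (dx (dx w)))) := contDiff_dx hwxx one_add_one_eq_two.le
  have hw₀ := hasDerivAt_dx (hw.differentiable four_ne_zero) x t
  have hw₁ := hasDerivAt_dx (hwx.differentiable three_ne_zero) x t
  have hw₂ := hasDerivAt_dx (hwxx.differentiable two_ne_zero) x t
  have hw₃ := hasDerivAt_dx (hwxxx.differentiable one_ne_zero) x t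
  refine (((((hw₃.const_mul 2).fun_sub ((hw₀.fun_mul hw₂).const_mul 4)).fun_sub
    ((hw₁.fun_pow 2).const_mul 3)).fun_sub (((hw₀.fun_pow 2).fun_mul hw₁).const_mul 2)).fun_add
    (hw₀.fun_pow 4)).congr_deriv ?_
  push_cast
  ring

theorem Kup2.dt_eq_mul_kup2Factor (heq : Kup2 u) (hux : ∀ x t, dx u x t ≠ 0)
    (huxx : ∀ x t, HasDerivAt (fun y => dx u y t) (dx u x t * (2 * w x t)) x)
    (hw : ContDiff ℝ 3 (uncurry w)) :
    dt u = fun x t => dx u x t * kup2Factor w x t := by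
  funext x t
  rw [heq x t, dx_dx_dx_dx_eq_of_log_deriv huxx hw,
    dx_dx_dx_eq_of_log_deriv huxx (hw.of_le (by norm_num)),
    dx_dx_eq_of_log_deriv huxx (hw.of_le (by norm_num)), dx_eq_of_log_deriv huxx, kup2Factor]
  have := hux x t
  field_simp
  ring

theorem Kup2.dt_dx_eq_mul (heq : Kup2 u) (hu : ContDiff ℝ 2 (uncurry u))
    (hux : ∀ x t, dx u x t ≠ 0)
    (huxx : ∀ x t, HasDerivAt (fun y => dx u y t) (dx u x t * (2 * w x t)) x)
    (hw : ContDiff ℝ 4 (uncurry w)) (x t : ℝ) :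
    dt (dx u) x t = dx u x t * (dx (kup2Factor w) x t + 2 * w x t * kup2Factor w x t) := by
  have hg : ∀ x t, HasDerivAt (fun y => kup2Factor w y t) (dx (kup2Factor w) x t) x :=
    fun x t => (hasDerivAt_kup2Factor hw x t).differentiableAt.hasDerivAt
  rw [dt_dx_comm hu, heq.dt_eq_mul_kup2Factor hux huxx (hw.of_le (by norm_num)),
    dx_mul_of_hasDerivAt_mul huxx hg]

theorem kup1_iff_dt_eq (hU : ContDiff ℝ 5 (uncurry U)) :
    Kup1 U ↔ ∀ x t, dt U x t =
      dx (kup2Factor (dx U)) x t / 2 + dx U x t * kup2Factor (dx U) x t := by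
  have hw : ContDiff ℝ 4 (uncurry (dx U)) := contDiff_dx hU (by norm_num)
  refine forall₂_congr fun x t => ?_
  have hg : dx (kup2Factor (dx U)) x t = _ := (hasDerivAt_kup2Factor hw x t).deriv
  rw [hg, kup2Factor]
  exact Eq.congr_right (by ring)

end Kupershmidt

theorem kup2_to_kup1_general
    (u : ℝ → ℝ → ℝ)
    (hu : ContDiff ℝ 6 (fun p : ℝ × ℝ => u p.1 p.2))
    (hux : ∀ x t, dx u x t < 0)
    (heq : Kup2 u) :
    Kup1 (fun x t => (1/2) * Real.log (-2 * dx u x t)) := by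
  have hux₀ : ∀ x t, dx u x t ≠ 0 := fun x t => (hux x t).ne
  have hv : ContDiff ℝ 5 (uncurry (dx u)) := contDiff_dx hu (by norm_num)
  have hv_diff : Differentiable ℝ (uncurry (dx u)) := hv.differentiable (by norm_num)
  have hU : ContDiff ℝ 5 (uncurry (logPotential (dx u))) := contDiff_logPotential hv hux₀
  have hw : ContDiff ℝ 4 (uncurry (dx (logPotential (dx u)))) := contDiff_dx hU (by norm_num)
  have hvx : ∀ x t, HasDerivAt (fun y => dx u y t)
      (dx u x t * (2 * dx (logPotential (dx u)) x t)) x := fun x t =>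
    dx_eq_mul_dx_logPotential hv_diff (hux₀ x t) ▸ hasDerivAt_dx hv_diff x t
  refine (kup1_iff_dt_eq hU).2 fun x t => ?_
  have hUt : 2 * dt (logPotential (dx u)) x t = _ := mul_left_cancel₀ (hux₀ x t) <|
    (dt_eq_mul_dt_logPotential hv_diff (hux₀ x t)).symm.trans <|
      heq.dt_dx_eq_mul (hu.of_le (by norm_num)) hux₀ hvx hw x t
  linear_combination hUt / 2

/-- If `u` solves the 2nd potential Kupershmidt equation with `u_x < 0`, then
`U = (1/2)·ln(-2u_x)` solves the 1st potential Kupershmidt equation. -/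
theorem kup2_to_kup1
    (u : ℝ → ℝ → ℝ)
    (hu : ContDiff ℝ (⊤ : ℕ∞) (fun p : ℝ × ℝ => u p.1 p.2))
    (hux : ∀ x t, dx u x t < 0)
    (heq : Kup2 u) :
    Kup1 (fun x t => (1/2) * Real.log (-2 * dx u x t)) :=
  kup2_to_kup1_general u (contDiff_infty.1 hu 6) hux heq
end
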